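/- Let o(n,k) denote the number of ordered labeled trees on {0,1,...,n} whose maximal decreasing subtree has exactly k edges, and let z(m,k) denote the number of ordered labeled trees on {0,1,...,m} consisting of a decreasing tree with k edges together with m-k additional increasing leaves attached to it. Then for all integers n, k with 0 ≤ k < n, o(n,k) = Σ_{m=k}^{n} C(n+1, m+1) · z(m,k) · ((m-k)/(n-k)) · (n-k)^{(n-m)}, where x^{(j)} = x(x+1)···(x+j-1) is the rising factorial. -/

import Mathlib

/-- An ordered labeled tree: a root label together with an ordered list of subtrees. -/
inductive OTree : Type
  | node : ℕ → List OTree → OTree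

namespace OTree

/-- The label of the root. -/
def root : OTree → ℕ
  | node a _ => a

/-- The list of subtrees of the root (in order). -/
def children : OTree → List OTree
  | node _ ts => ts

mutual
  /-- The list of all vertex labels of the tree. -/
  def labels : OTree → List ℕ
    | node a ts => a :: labelsList ts
  def labelsList : List OTree → List ℕ
    | [] => []
    | t :: ts => labels t ++ labelsList ts
end

/-- The number of vertices of the tree. -/
def size (T : OTree) : ℕ := T.labels.length

mutual
  /-- The maximal decreasing subtree from the root: keep exactly the children whose
  label is smaller than their parent's label, recursively. -/
  def md : OTree → OTree
    | node a ts => node a (mdList a ts)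
  def mdList : ℕ → List OTree → List OTree
    | _, [] => []
    | a, t :: ts => (if t.root < a then [md t] else []) ++ mdList a ts
end

mutual
  /-- `IsZ T` states that every vertex of `T` not in the maximal decreasing subtree is a
  leaf (attached by an increasing edge to a vertex of the maximal decreasing subtree). -/
  def IsZ : OTree → Prop
    | node a ts => IsZList a ts
  def IsZList : ℕ → List OTree → Prop
    | _, [] => True
    | a, t :: ts => (if t.root < a then IsZ t else t.children = []) ∧ IsZList a ts
end

/-- `T.OnRange n` : the vertices of `T` are labeled by distinct labels and the set of
labels is exactly `{0, 1, …, n}`. -/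
def OnRange (T : OTree) (n : ℕ) : Prop :=
  T.labels.Nodup ∧ ∀ i, i ∈ T.labels ↔ i ≤ n

end OTree

/-- `T` is a member of `O_{n,k}`: an ordered labeled tree on `{0,…,n}` whose maximal
decreasing subtree has exactly `k` edges (i.e. `k+1` vertices). -/
def MemO (T : OTree) (n k : ℕ) : Prop :=
  T.OnRange n ∧ T.md.size = k + 1

/-- `T` is a member of `Z_{m,k}`: an ordered labeled tree on `{0,…,m}` consisting of a
decreasing tree with `k` edges (its maximal decreasing subtree) together with `m-k`
additional increasing leaves attached to it. -/
def MemZ (T : OTree) (m k : ℕ) : Prop :=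
  T.OnRange m ∧ T.md.size = k + 1 ∧ T.IsZ


namespace OTree

mutual
  /-- Prune the subtrees hanging below increasing edges to leaves. -/
  def zt : OTree → OTree
    | node a ts => node a (ztList a ts)
  def ztList : ℕ → List OTree → List OTree
    | _, [] => []
    | a, t :: ts => (if t.root < a then zt t else node t.root []) :: ztList a ts
end

mutual
  /-- The child lists of the increasing leaves of the pruned tree. -/
  def fr : OTree → List (List OTree)
    | node a ts => frList a ts
  def frList : ℕ → List OTree → List (List OTree)
    | _, [] => []
    | a, t :: ts => (if t.root < a then fr t else [t.children]) ++ frList a ts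
end

/-- Labels of a list of forests. -/
def labelsLL (L : List (List OTree)) : List ℕ := L.flatMap labelsList

theorem root_node (a : ℕ) (ts : List OTree) : (node a ts).root = a := rfl

theorem children_node (a : ℕ) (ts : List OTree) : (node a ts).children = ts := rfl

theorem zt_root (t : OTree) : t.zt.root = t.root := by
  cases t; simp [zt, root]

theorem md_root (t : OTree) : t.md.root = t.root := by
  cases t; simp [md, root]

mutual
  theorem isZ_zt : ∀ t : OTree, t.zt.IsZ
    | node a ts => by
      simp only [zt, IsZ]; exact isZList_zt a ts
  theorem isZList_zt : ∀ (a : ℕ) (ts : List OTree), IsZList a (ztList a ts)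
    | _, [] => by simp [ztList, IsZList]
    | a, t :: ts => by
      have h1 := isZ_zt t
      have h2 := isZList_zt a ts
      simp only [ztList, IsZList]
      refine ⟨?_, h2⟩
      by_cases h : t.root < a
      · simp [h, zt_root, h1]
      · simp only [h, if_false, root_node, children_node]
end

mutual
  theorem md_zt : ∀ t : OTree, t.zt.md = t.md
    | node a ts => by
      simp only [zt, md]; rw [mdList_zt a ts]
  theorem mdList_zt : ∀ (a : ℕ) (ts : List OTree), mdList a (ztList a ts) = mdList a ts
    | _, [] => by simp [ztList, mdList]
    | a, t :: ts => by
      have h1 := md_zt t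
      have h2 := mdList_zt a ts
      simp only [ztList, mdList, h2]
      by_cases h : t.root < a
      · simp [h, zt_root, h1]
      · simp [h, root_node]
end

theorem labels_eq (t : OTree) : t.labels = t.root :: labelsList t.children := by
  cases t; simp [labels, root, children]

mutual
  theorem labels_perm : ∀ t : OTree, t.labels.Perm (t.zt.labels ++ labelsLL t.fr)
    | node a ts => by
      simp only [zt, fr, labels, List.cons_append]
      exact (labelsList_perm a ts).cons a
  theorem labelsList_perm : ∀ (a : ℕ) (ts : List OTree),
      (labelsList ts).Perm (labelsList (ztList a ts) ++ labelsLL (frList a ts))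
    | _, [] => by simp [ztList, frList, labelsList, labelsLL]
    | a, t :: ts => by
      have h1 := labels_perm t
      have h2 := labelsList_perm a ts
      rw [← Multiset.coe_eq_coe] at *
      simp only [labelsLL, ← Multiset.coe_add] at *
      by_cases h : t.root < a
      · simp only [ztList, frList, labelsList, h, if_true, List.flatMap_append,
          ← Multiset.coe_add, h1, h2]
        abel
      · have e : (t.labels : Multiset ℕ) = ([t.root] : List ℕ) + (labelsList t.children : Multiset ℕ) := by
          rw [labels_eq]; rfl
        simp only [ztList, frList, labelsList, h, if_false, List.flatMap_append,
          ← Multiset.coe_add, h2, e, labels, List.flatMap_cons, List.flatMap_nil, List.append_nil]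
        abel
end

mutual
  theorem size_fr : ∀ t : OTree, t.fr.length + t.md.labels.length = t.zt.labels.length
    | node a ts => by
      have := size_frList a ts
      simp only [zt, fr, md, labels, List.length_cons]
      omega
  theorem size_frList : ∀ (a : ℕ) (ts : List OTree),
      (frList a ts).length + (labelsList (mdList a ts)).length = (labelsList (ztList a ts)).length
    | _, [] => by simp [ztList, frList, labelsList, mdList]
    | a, t :: ts => by
      have h1 := size_fr t
      have h2 := size_frList a ts
      by_cases h : t.root < a
      · simp [ztList, frList, mdList, labelsList, h]
        omega
      · simp [ztList, frList, mdList, labelsList, h, labels]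
        omega
end

theorem eq_of_root_children {t u : OTree} (h : t.root = u.root) (h' : t.children = u.children) :
    t = u := by
  cases t; cases u; simp_all [root, children]

mutual
  theorem zf_inj : ∀ t u : OTree, t.zt = u.zt → t.fr = u.fr → t = u
    | node a ts, node b us => by
      intro h1 h2
      simp only [zt, fr, node.injEq] at h1 h2
      obtain ⟨rfl, h1⟩ := h1
      rw [zf_injList a ts us h1 h2]
  theorem zf_injList : ∀ (a : ℕ) (ts us : List OTree), ztList a ts = ztList a us →
      frList a ts = frList a us → ts = us
    | _, [], [] => fun _ _ => rfl
    | _, [], _ :: _ => by simp [ztList]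
    | _, _ :: _, [] => by simp [ztList]
    | a, t :: ts, u :: us => by
      intro h1 h2
      have i1 := zf_inj t u
      have i2 := zf_injList a ts us
      have st := size_fr t
      have su := size_fr u
      have mt := md_zt t
      have mu := md_zt u
      simp only [ztList, List.cons.injEq] at h1
      obtain ⟨h1, h3⟩ := h1
      have hr : t.root = u.root := by
        have := congrArg root h1
        split_ifs at this <;> simpa [zt_root, root_node] using this
      by_cases h : t.root < a
      · have h' := h
        rw [hr] at h'
        simp only [h, h', if_true] at h1
        simp only [frList, h, h', if_true] at h2
        have hl : t.fr.length = u.fr.length := by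
          rw [h1] at st mt
          rw [mu] at mt
          rw [← mt] at st
          omega
        obtain ⟨h4, h5⟩ := List.append_inj h2 hl
        rw [i1 h1 h4, i2 h3 h5]
      · have h' := h
        rw [hr] at h'
        simp only [frList, h, h', if_false, List.cons_append, List.nil_append,
          List.cons.injEq] at h2
        rw [i2 h3 h2.2, eq_of_root_children hr h2.1]
end

mutual
  theorem zf_surj : ∀ (Z : OTree) (L : List (List OTree)), Z.IsZ → L.length = Z.fr.length →
      ∃ T : OTree, T.zt = Z ∧ T.fr = L
    | node a zs, L => by
      intro h1 h2
      simp only [IsZ, fr] at h1 h2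
      obtain ⟨ts, h3, h4⟩ := zf_surjList a zs L h1 h2
      exact ⟨node a ts, by simp [zt, h3], by simp [fr, h4]⟩
  theorem zf_surjList : ∀ (a : ℕ) (zs : List OTree) (L : List (List OTree)), IsZList a zs →
      L.length = (frList a zs).length → ∃ ts : List OTree, ztList a ts = zs ∧ frList a ts = L
    | a, [], L => by
      intro _ h
      simp only [frList, List.length_nil, List.length_eq_zero_iff] at h
      exact ⟨[], by simp [ztList], by simp [frList, h]⟩
    | a, z :: zs, L => by
      intro h1 h2
      simp only [IsZList] at h1
      obtain ⟨h1, h3⟩ := h1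
      by_cases h : z.root < a
      · simp only [h, if_true] at h1
        simp only [frList, h, if_true, List.length_append] at h2
        obtain ⟨t, e1, e2⟩ := zf_surj z (L.take z.fr.length) h1 (by simp; omega)
        obtain ⟨ts, e3, e4⟩ := zf_surjList a zs (L.drop z.fr.length) h3 (by simp; omega)
        have hr : t.root < a := by rw [← zt_root, e1]; exact h
        exact ⟨t :: ts, by simp [ztList, hr, e1, e3],
          by simp [frList, hr, e2, e4]⟩
      · simp only [h, if_false] at h1
        simp only [frList, h, if_false, List.length_append, List.length_singleton] at h2
        cases L with
        | nil => simp at h2; omega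
        | cons l L =>
          obtain ⟨ts, e3, e4⟩ := zf_surjList a zs L h3 (by simp at h2; omega)
          have hz : node z.root [] = z :=
            eq_of_root_children rfl (by rw [children_node, h1])
          exact ⟨node z.root l :: ts, by simp [ztList, h, e3, root_node, hz],
            by simp [frList, h, e4, root_node, children_node]⟩
end

mutual
  theorem zt_of_isZ : ∀ Z : OTree, Z.IsZ → Z.zt = Z
    | node a ts => by
      intro h
      simp only [IsZ] at h
      simp only [zt, zt_of_isZList a ts h]
  theorem zt_of_isZList : ∀ (a : ℕ) (ts : List OTree), IsZList a ts → ztList a ts = ts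
    | _, [] => by simp [ztList]
    | a, t :: ts => by
      intro h
      simp only [IsZList] at h
      have h1 := zt_of_isZ t
      have h2 := zt_of_isZList a ts h.2
      by_cases hr : t.root < a
      · simp only [hr, if_true] at h
        simp [ztList, hr, h1 h.1, h2]
      · simp only [hr, if_false] at h
        simp only [ztList, hr, if_false, h2]
        rw [eq_of_root_children (t := node t.root []) (u := t) rfl
          (by rw [children_node, h.1])]
end

/-! Relabelling -/

mutual
  def rl (f : ℕ → ℕ) : OTree → OTree
    | node a ts => node (f a) (rlList f ts)
  def rlList (f : ℕ → ℕ) : List OTree → List OTree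
    | [] => []
    | t :: ts => rl f t :: rlList f ts
end

theorem rl_root (f : ℕ → ℕ) (t : OTree) : (rl f t).root = f t.root := by
  cases t; simp [rl, root]

mutual
  theorem labels_rl (f : ℕ → ℕ) : ∀ t : OTree, (rl f t).labels = t.labels.map f
    | node a ts => by simp [rl, labels, labels_rlList f ts]
  theorem labels_rlList (f : ℕ → ℕ) : ∀ ts : List OTree,
      labelsList (rlList f ts) = (labelsList ts).map f
    | [] => by simp [rlList, labelsList]
    | t :: ts => by simp [rlList, labelsList, labels_rl f t, labels_rlList f ts]
end

mutual
  theorem rl_rl (f g : ℕ → ℕ) : ∀ t : OTree, (∀ i ∈ t.labels, g (f i) = i) → rl g (rl f t) = t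
    | node a ts => by
      intro h
      simp only [labels, List.mem_cons, forall_eq_or_imp] at h
      simp [rl, h.1, rl_rlList f g ts h.2]
  theorem rl_rlList (f g : ℕ → ℕ) : ∀ ts : List OTree, (∀ i ∈ labelsList ts, g (f i) = i) →
      rlList g (rlList f ts) = ts
    | [] => by simp [rlList]
    | t :: ts => by
      intro h
      simp only [labelsList, List.mem_append] at h
      simp [rlList, rl_rl f g t (fun i hi => h i (Or.inl hi)),
        rl_rlList f g ts (fun i hi => h i (Or.inr hi))]
end

theorem root_mem (t : OTree) : t.root ∈ t.labels := by
  rw [labels_eq]; simp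

mutual
  theorem md_rl (f : ℕ → ℕ) (s : Set ℕ) (hf : StrictMonoOn f s) : ∀ t : OTree,
      (∀ i ∈ t.labels, i ∈ s) → (rl f t).md = rl f t.md ∧ (t.IsZ → (rl f t).IsZ)
    | node a ts => by
      intro h
      simp only [labels, List.mem_cons, forall_eq_or_imp] at h
      have := md_rlList f s hf a h.1 ts h.2
      simp only [rl, md, IsZ, this.1]
      exact ⟨trivial, this.2⟩
  theorem md_rlList (f : ℕ → ℕ) (s : Set ℕ) (hf : StrictMonoOn f s) (a : ℕ) (ha : a ∈ s) :
      ∀ ts : List OTree, (∀ i ∈ labelsList ts, i ∈ s) →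
      mdList (f a) (rlList f ts) = rlList f (mdList a ts) ∧
        (IsZList a ts → IsZList (f a) (rlList f ts))
    | [] => by simp [rlList, mdList, IsZList]
    | t :: ts => by
      intro h
      simp only [labelsList, List.mem_append] at h
      have h1 := md_rl f s hf t (fun i hi => h i (Or.inl hi))
      have h2 := md_rlList f s hf a ha ts (fun i hi => h i (Or.inr hi))
      have hr : f t.root < f a ↔ t.root < a :=
        hf.lt_iff_lt (h _ (Or.inl t.root_mem)) ha
      by_cases hr' : t.root < a
      · simp only [rlList, mdList, IsZList, rl_root, hr, hr', if_true, h1.1, h2.1,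
          List.cons_append, List.nil_append]
        exact ⟨trivial, fun x => ⟨h1.2 x.1, h2.2 x.2⟩⟩
      · simp only [rlList, mdList, IsZList, rl_root, hr, hr', if_false, h2.1, List.nil_append]
        refine ⟨trivial, fun x => ⟨?_, h2.2 x.2⟩⟩
        have := x.1
        cases t
        simp only [children] at this
        simp [rl, children, this, rlList]
end

/-- Lists of `r` forests with label set exactly `Q`. -/
def GoodF (r : ℕ) (Q : Finset ℕ) (L : List (List OTree)) : Prop :=
  L.length = r ∧ (labelsLL L).Nodup ∧ ∀ i, i ∈ labelsLL L ↔ i ∈ Q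

/-- Pruned trees on label set `S`. -/
def GoodZ (S : Finset ℕ) (k : ℕ) (T : OTree) : Prop :=
  T.labels.Nodup ∧ (∀ i, i ∈ T.labels ↔ i ∈ S) ∧ T.md.size = k + 1 ∧ T.IsZ

theorem goodZ_card_le (S T : Finset ℕ) (k : ℕ) (f g : ℕ → ℕ)
    (hf : StrictMonoOn f S) (hg : StrictMonoOn g T) (hfT : ∀ i ∈ S, f i ∈ T)
    (hgS : ∀ i ∈ T, g i ∈ S) (hgf : ∀ i ∈ S, g (f i) = i) (hfg : ∀ i ∈ T, f (g i) = i) :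
    Nat.card {t // GoodZ S k t} = Nat.card {t // GoodZ T k t} := by
  have key : ∀ (S T : Finset ℕ) (f g : ℕ → ℕ)
    (_ : StrictMonoOn f S) (_ : ∀ i ∈ S, f i ∈ T)
    (_ : ∀ i ∈ T, g i ∈ S) (_ : ∀ i ∈ T, f (g i) = i) (t : OTree), GoodZ S k t →
      GoodZ T k (rl f t) := by
    intro S T f g hf hfT hgS hfg t ⟨h1, h2, h3, h4⟩
    have hm := md_rl f S hf t (fun i hi => (h2 i).1 hi)
    refine ⟨?_, ?_, ?_, hm.2 h4⟩
    · rw [labels_rl]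
      refine h1.map_on ?_
      intro x hx y hy hxy
      exact hf.injOn ((h2 x).1 hx) ((h2 y).1 hy) hxy
    · intro i
      rw [labels_rl, List.mem_map]
      constructor
      · rintro ⟨j, hj, rfl⟩
        exact hfT _ ((h2 j).1 hj)
      · intro hi
        exact ⟨g i, (h2 _).2 (hgS i hi), hfg i hi⟩
    · rw [hm.1, size, labels_rl, List.length_map]
      exact h3
  refine Nat.card_congr
    { toFun := fun t => ⟨rl f t.1, key S T f g hf hfT hgS hfg t.1 t.2⟩
      invFun := fun t => ⟨rl g t.1, key T S g f hg hgS hfT hgf t.1 t.2⟩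
      left_inv := ?_
      right_inv := ?_ }
  · rintro ⟨t, ht⟩
    exact Subtype.ext (rl_rl f g t (fun i hi => hgf i ((ht.2.1 i).1 hi)))
  · rintro ⟨t, ht⟩
    exact Subtype.ext (rl_rl g f t (fun i hi => hfg i ((ht.2.1 i).1 hi)))

theorem goodZ_card (S : Finset ℕ) (m k : ℕ) (hS : S.card = m + 1) :
    Nat.card {t // GoodZ S k t} = Nat.card {t // MemZ t m k} := by
  have e : Nat.card {t // GoodZ S k t} = Nat.card {t // GoodZ (Finset.range (m+1)) k t} := by
    let p : ℕ → Prop := fun i => i ∈ S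
    have hfin : (Set.ofPred p).Finite := S.finite_toSet
    have hc : hfin.toFinset.card = m + 1 := by
      rw [← hS]; congr 1; ext i; simp [p]
    have hlt : ∀ i ∈ Finset.range (m+1), ∀ hf : (Set.ofPred p).Finite, i < hf.toFinset.card := by
      intro i hi hf
      rw [hc]; simpa using hi
    have hgS : ∀ i ∈ Finset.range (m+1), Nat.nth p i ∈ S := fun i hi =>
      Nat.nth_mem i (hlt i hi)
    have hfg : ∀ i ∈ Finset.range (m+1), Nat.count p (Nat.nth p i) = i := fun i hi =>
      Nat.count_nth (hlt i hi)
    have hgf : ∀ i ∈ S, Nat.nth p (Nat.count p i) = i := fun i hi => Nat.nth_count (p := p) hi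
    refine goodZ_card_le S _ k (Nat.count p) (Nat.nth p) ?_ ?_ ?_ hgS hgf hfg
    · intro i hi j _ hij
      exact Nat.count_strict_mono (p := p) hi hij
    · have := Nat.nth_strictMonoOn hfin
      rw [hc] at this
      intro i hi j hj hij
      exact this (by simpa using hi) (by simpa using hj) hij
    · intro i hi
      have := Nat.count_lt_card (p := p) hfin hi
      rw [hc] at this
      simpa using this
  rw [e]
  refine Nat.card_congr (Equiv.subtypeEquivRight fun t => ?_)
  simp only [GoodZ, MemZ, OnRange, Finset.mem_range, Nat.lt_succ_iff, and_assoc]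

/-- The number of lists of `r` forests on `q` labels. -/
def gf : ℕ → ℕ → ℕ
  | _, 0 => 1
  | r, q + 1 => r * (r + q + 2).ascFactorial q

theorem gf_rec (r q : ℕ) : gf (r+1) (q+1) = gf r (q+1) + (q+1) * gf (r+2) q := by
  cases q with
  | zero => simp [gf]
  | succ p =>
    simp only [gf]
    have h1 : (r + 1 + (p+1) + 2).ascFactorial (p+1) = (r+2*p+4) * (r+p+4).ascFactorial p := by
      rw [Nat.ascFactorial_succ]
      rw [show r + 1 + (p+1) + 2 = r+p+4 by ring]
      ring
    have h2 : (r + (p+1) + 2).ascFactorial (p+1) = (r+p+3) * (r+p+4).ascFactorial p := by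
      rw [Nat.ascFactorial_succ, ← Nat.succ_ascFactorial]
      rw [show r + (p+1) + 2 = r+p+3 by ring]
    rw [h1, h2, show r + 2 + p + 2 = r+p+4 by ring]
    ring

/-- The one-step construction of a list of forests. -/
theorem step_card (r : ℕ) (Q : Finset ℕ)
    (h1 : Finite {L // GoodF r Q L})
    (h2 : ∀ a ∈ Q, Finite {L // GoodF (r+2) (Q.erase a) L}) :
    Finite {L // GoodF (r+1) Q L} ∧ Nat.card {L // GoodF (r+1) Q L} =
      Nat.card {L // GoodF r Q L} + ∑ a : Q, Nat.card {L // GoodF (r+2) (Q.erase a) L} := by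
  have h2' : ∀ a : Q, Finite {L // GoodF (r+2) (Q.erase a) L} := fun a => h2 a a.2
  have lab : ∀ a cs ts rest, labelsLL ((node a cs :: ts) :: rest) =
      a :: labelsLL (cs :: ts :: rest) := by
    intro a cs ts rest
    simp [labelsLL, labelsList, labels]
  have labn : ∀ rest, labelsLL ([] :: rest) = labelsLL rest := by
    intro rest
    simp [labelsLL, labelsList]
  have good : ∀ a cs ts rest, (GoodF (r+1) Q ((node a cs :: ts) :: rest) ↔
      a ∈ Q ∧ GoodF (r+2) (Q.erase a) (cs :: ts :: rest)) := by
    intro a cs ts rest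
    simp only [GoodF, lab, List.length_cons, List.nodup_cons, List.mem_cons, Finset.mem_erase]
    constructor
    · rintro ⟨e1, ⟨e2, e3⟩, e4⟩
      refine ⟨(e4 a).1 (Or.inl rfl), by omega, e3, fun i => ?_⟩
      rw [← e4 i]
      constructor
      · intro hi
        exact ⟨fun h => e2 (h ▸ hi), Or.inr hi⟩
      · rintro ⟨e5, e6⟩
        exact e6.resolve_left e5
    · rintro ⟨e0, e1, e3, e4⟩
      refine ⟨by omega, ⟨fun h => ((e4 a).1 h).1 rfl, e3⟩, fun i => ?_⟩
      rw [e4 i]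
      by_cases h : i = a
      · simp [h, e0]
      · simp [h]
  have goodn : ∀ rest, GoodF (r+1) Q ([] :: rest) ↔ GoodF r Q rest := by
    intro rest
    simp [GoodF, labn]
  let e : {L // GoodF (r+1) Q L} ≃
      {L // GoodF r Q L} ⊕ (Σ a : Q, {L // GoodF (r+2) (Q.erase a) L}) :=
    { toFun := fun L => match L with
        | ⟨[], h⟩ => by exfalso; simpa using h.1
        | ⟨[] :: rest, h⟩ => Sum.inl ⟨rest, (goodn rest).1 h⟩
        | ⟨(node a cs :: ts) :: rest, h⟩ =>
          Sum.inr ⟨⟨a, ((good a cs ts rest).1 h).1⟩,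
            ⟨cs :: ts :: rest, ((good a cs ts rest).1 h).2⟩⟩
      invFun := fun x => match x with
        | Sum.inl ⟨rest, h⟩ => ⟨[] :: rest, (goodn rest).2 h⟩
        | Sum.inr ⟨⟨a, ha⟩, ⟨cs :: ts :: rest, h⟩⟩ =>
          ⟨(node a cs :: ts) :: rest, (good a cs ts rest).2 ⟨ha, h⟩⟩
        | Sum.inr ⟨⟨a, ha⟩, ⟨[], h⟩⟩ => by exfalso; simpa using h.1
        | Sum.inr ⟨⟨a, ha⟩, ⟨[_], h⟩⟩ => by exfalso; simpa using h.1
      left_inv := by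
        rintro ⟨L, h⟩
        match L, h with
        | [], h => exfalso; simpa using h.1
        | [] :: rest, h => rfl
        | (node a cs :: ts) :: rest, h => rfl
      right_inv := by
        rintro (⟨rest, h⟩ | ⟨⟨a, ha⟩, ⟨L, h⟩⟩)
        · rfl
        · match L, h with
          | [], h => exfalso; simpa using h.1
          | [_], h => exfalso; simpa using h.1
          | cs :: ts :: rest, h => rfl }
  refine ⟨Finite.of_equiv _ e.symm, ?_⟩
  rw [Nat.card_congr e, Nat.card_sum, Nat.card_sigma]

theorem goodF_card : ∀ (N r : ℕ) (Q : Finset ℕ), 2 * Q.card + r = N →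
    Finite {L // GoodF r Q L} ∧ Nat.card {L // GoodF r Q L} = gf r Q.card := by
  intro N
  induction N using Nat.strong_induction_on with
  | _ N ih =>
    intro r Q hN
    cases r with
    | zero =>
      by_cases hQ : Q = ∅
      · subst hQ
        have hu : ∀ L, GoodF 0 ∅ L ↔ L = [] := by
          intro L
          constructor
          · intro h; exact List.length_eq_zero_iff.1 h.1
          · rintro rfl; simp [GoodF, labelsLL]
        have : Unique {L // GoodF 0 ∅ L} :=
          { default := ⟨[], (hu []).2 rfl⟩
            uniq := fun x => Subtype.ext ((hu _).1 x.2) }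
        exact ⟨inferInstance, by simp [gf]⟩
      · have : IsEmpty {L // GoodF 0 Q L} := by
          refine ⟨?_⟩
          rintro ⟨L, h1, h2, h3⟩
          have := List.length_eq_zero_iff.1 h1
          subst this
          apply hQ
          ext i
          rw [← h3 i]
          simp [labelsLL]
        refine ⟨inferInstance, ?_⟩
        obtain ⟨q, hq⟩ : ∃ q, Q.card = q + 1 :=
          Nat.exists_eq_succ_of_ne_zero (by simpa using hQ)
        simp [hq, gf]
    | succ r =>
      have i1 := ih (2 * Q.card + r) (by omega) r Q rfl
      have i2 : ∀ a ∈ Q, _ := fun a ha => ih (2 * (Q.erase a).card + (r+2))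
        (by have := Finset.card_erase_add_one ha; omega) (r+2) (Q.erase a) rfl
      obtain ⟨s1, s2⟩ := step_card r Q i1.1 (fun a ha => (i2 a ha).1)
      refine ⟨s1, ?_⟩
      rw [s2, i1.2]
      have hs : ∀ a : Q, Nat.card {L // GoodF (r+2) (Q.erase a) L} = gf (r+2) (Q.card - 1) := by
        intro a
        rw [(i2 a a.2).2, Finset.card_erase_of_mem a.2]
      simp only [hs, Finset.sum_const, Finset.card_univ, Fintype.card_coe, smul_eq_mul]
      cases hq : Q.card with
      | zero => simp [gf]
      | succ q => rw [gf_rec]; simp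

theorem goodF_finite (r : ℕ) (Q : Finset ℕ) : Finite {L // GoodF r Q L} :=
  (goodF_card _ r Q rfl).1

theorem goodZ_finite (S : Finset ℕ) (k : ℕ) : Finite {t // GoodZ S k t} := by
  have := goodF_finite 1 S
  refine Finite.of_injective
    (fun t : {t // GoodZ S k t} => (⟨[[t.1]], ?_⟩ : {L // GoodF 1 S L})) ?_
  · have := t.2
    refine ⟨rfl, ?_, ?_⟩
    · simpa [labelsLL, labelsList] using this.1
    · simpa [labelsLL, labelsList] using this.2.1
  · rintro ⟨t, ht⟩ ⟨u, hu⟩ h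
    have hval : [[t]] = [[u]] := congrArg Subtype.val h
    simp only [List.cons.injEq, and_true] at hval
    exact Subtype.ext hval

/-- The pairs (pruned tree, forests). -/
def GoodP (n k : ℕ) (p : OTree × List (List OTree)) : Prop :=
  p.1.IsZ ∧ p.1.md.size = k + 1 ∧ p.2.length + (k + 1) = p.1.labels.length ∧
    (p.1.labels ++ labelsLL p.2).Nodup ∧ ∀ i, i ∈ p.1.labels ++ labelsLL p.2 ↔ i ≤ n

theorem memO_card (n k : ℕ) :
    Nat.card {T : OTree // MemO T n k} = Nat.card {p // GoodP n k p} := by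
  refine Nat.card_congr (Equiv.ofBijective (fun T => ⟨(T.1.zt, T.1.fr), ?_⟩) ⟨?_, ?_⟩)
  · obtain ⟨T, ⟨h1, h2⟩, h3⟩ := T
    have hp := labels_perm T
    have hs := size_fr T
    refine ⟨isZ_zt T, by simpa [md_zt] using h3, ?_, hp.nodup_iff.1 h1, fun i => ?_⟩
    · change T.fr.length + (k + 1) = T.zt.labels.length
      rw [← h3]; exact hs
    · rw [← h2 i]; exact hp.mem_iff.symm
  · rintro ⟨T, hT⟩ ⟨U, hU⟩ h
    simp only [Subtype.mk.injEq, Prod.mk.injEq] at h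
    exact Subtype.ext (zf_inj T U h.1 h.2)
  · rintro ⟨⟨Z, L⟩, h1, h2, h3, h4, h5⟩
    simp only at h1 h2 h3 h4 h5
    have hs := size_fr Z
    rw [zt_of_isZ Z h1] at hs
    have hL : L.length = Z.fr.length := by
      simp only [size] at h2
      omega
    obtain ⟨T, rfl, rfl⟩ := zf_surj Z L h1 hL
    have hp := labels_perm T
    refine ⟨⟨T, ⟨hp.nodup_iff.2 h4, fun i => ?_⟩, by simpa [md_zt] using h2⟩, rfl⟩
    rw [← h5 i]; exact hp.mem_iff

theorem goodP_card (n k : ℕ) :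
    Nat.card {p // GoodP n k p} = ∑ S ∈ (Finset.range (n+1)).powerset,
      Nat.card {t // GoodZ S k t} * gf (S.card - (k+1)) (n + 1 - S.card) := by
  let F : {p // GoodP n k p} → {S // S ∈ (Finset.range (n+1)).powerset} := fun p =>
    ⟨p.1.1.labels.toFinset, by
      rw [Finset.mem_powerset]
      intro i hi
      have := (p.2.2.2.2.2 i).1 (List.mem_append_left _ (List.mem_toFinset.1 hi))
      simp; omega⟩
  have key : ∀ S : {S // S ∈ (Finset.range (n+1)).powerset},
      Nonempty ({p // F p = S} ≃ {t // GoodZ S.1 k t} ×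
        {L // GoodF (S.1.card - (k+1)) (Finset.range (n+1) \ S.1) L}) := by
    rintro ⟨S, hS⟩
    rw [Finset.mem_powerset] at hS
    refine ⟨{ toFun := fun p => ⟨⟨p.1.1.1, ?_⟩, ⟨p.1.1.2, ?_⟩⟩
              invFun := fun x => ⟨⟨(x.1.1, x.2.1), ?_⟩, ?_⟩
              left_inv := fun _ => rfl
              right_inv := fun _ => rfl }⟩
    · obtain ⟨⟨⟨Z, L⟩, h1, h2, h3, h4, h5⟩, h6⟩ := p
      have h7 : Z.labels.toFinset = S := congrArg Subtype.val h6
      exact ⟨(List.nodup_append.1 h4).1, fun i => by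
        change i ∈ Z.labels ↔ i ∈ S
        rw [← h7, List.mem_toFinset], h2, h1⟩
    · obtain ⟨⟨⟨Z, L⟩, h1, h2, h3, h4, h5⟩, h6⟩ := p
      have h7 : Z.labels.toFinset = S := congrArg Subtype.val h6
      simp only at h1 h2 h3 h4 h5
      have h8 := List.nodup_append.1 h4
      refine ⟨?_, h8.2.1, fun i => ?_⟩
      · change L.length = S.card - (k + 1)
        rw [← h7, List.toFinset_card_of_nodup h8.1]
        omega
      · change i ∈ labelsLL L ↔ i ∈ Finset.range (n+1) \ S
        simp only [← h7, Finset.mem_sdiff, Finset.mem_range, Nat.lt_succ_iff, ← h5 i,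
          List.mem_toFinset, List.mem_append]
        constructor
        · intro hi
          exact ⟨Or.inr hi, fun hz => h8.2.2 i hz i hi rfl⟩
        · rintro ⟨a, b⟩
          exact a.resolve_left b
    · obtain ⟨⟨Z, z1, z2, z3, z4⟩, ⟨L, l1, l2, l3⟩⟩ := x
      have h7 : Z.labels.toFinset = S := by ext i; rw [List.mem_toFinset, z2]
      have l1' : L.length = S.card - (k + 1) := l1
      have hc : Z.labels.length = S.card := by
        rw [← h7, List.toFinset_card_of_nodup z1]
      have hle : k + 1 ≤ Z.labels.length := by
        have := size_fr Z
        rw [zt_of_isZ Z z4] at this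
        simp only [size] at z3
        omega
      refine ⟨z4, z3, ?_, ?_, ?_⟩
      · simp only
        omega
      · refine List.nodup_append.2 ⟨z1, l2, ?_⟩
        rintro a ha b hb rfl
        have := (l3 a).1 hb
        rw [Finset.mem_sdiff] at this
        exact this.2 ((z2 a).1 ha)
      · intro i
        simp only [List.mem_append, z2, l3, Finset.mem_sdiff, Finset.mem_range, Nat.lt_succ_iff]
        constructor
        · rintro (h | h)
          · have := hS h
            simp at this; omega
          · exact h.1
        · intro h
          by_cases hi : i ∈ S
          · exact Or.inl hi
          · exact Or.inr ⟨h, hi⟩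
    · obtain ⟨⟨Z, z1, z2, z3, z4⟩, ⟨L, l1, l2, l3⟩⟩ := x
      apply Subtype.ext
      ext i
      simp only [F, List.mem_toFinset, z2]
  have hfin : ∀ S, Finite {p // F p = S} := by
    intro S
    have := goodZ_finite S.1 k
    have := goodF_finite (S.1.card - (k+1)) (Finset.range (n+1) \ S.1)
    exact Finite.of_equiv _ (key S).some.symm
  rw [← Nat.card_congr (Equiv.sigmaFiberEquiv F), Nat.card_sigma,
    ← Finset.sum_coe_sort (Finset.range (n+1)).powerset]
  refine Finset.sum_congr rfl fun S _ => ?_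
  rw [Nat.card_congr (key S).some, Nat.card_prod, (goodF_card _ _ _ rfl).2,
    Finset.card_sdiff_of_subset (Finset.mem_powerset.1 S.2), Finset.card_range]

theorem memZ_card_zero (m k : ℕ) (h : m < k) : Nat.card {t // MemZ t m k} = 0 := by
  have : IsEmpty {t // MemZ t m k} := by
    refine ⟨?_⟩
    rintro ⟨Z, ⟨h1, h2⟩, h3, h4⟩
    have hs := size_fr Z
    rw [zt_of_isZ Z h4] at hs
    have h7 : Z.labels.toFinset = Finset.range (m+1) := by
      ext i; rw [List.mem_toFinset, h2, Finset.mem_range]; omega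
    have hc : Z.labels.length = m + 1 := by
      rw [← List.toFinset_card_of_nodup h1, h7, Finset.card_range]
    simp only [size] at h3
    omega
  simp

theorem goodZ_card_empty (k : ℕ) : Nat.card {t // GoodZ ∅ k t} = 0 := by
  have : IsEmpty {t // GoodZ ∅ k t} := by
    refine ⟨?_⟩
    rintro ⟨Z, _, h2, _⟩
    simpa using (h2 _).1 Z.root_mem
  simp

theorem gf_eq (r q : ℕ) (h : 0 < r + q) :
    (gf r q : ℚ) = (r : ℚ) / ((r + q : ℕ) : ℚ) * ((r + q).ascFactorial q : ℚ) := by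
  have h0 : ((r + q : ℕ) : ℚ) ≠ 0 := by exact_mod_cast h.ne'
  cases q with
  | zero =>
    simp only [gf, Nat.add_zero, Nat.ascFactorial_zero] at *
    field_simp
  | succ q =>
    have e : (r + (q+1)).ascFactorial (q+1) = (r + (q+1)) * (r+q+2).ascFactorial q := by
      rw [Nat.ascFactorial_succ, ← Nat.succ_ascFactorial]
      rfl
    rw [e]
    simp only [gf]
    rw [Nat.cast_mul, Nat.cast_mul]
    field_simp

theorem o_nat (n k : ℕ) (hkn : k < n) : Nat.card {T : OTree // MemO T n k} =
    ∑ m ∈ Finset.Icc k n, (n+1).choose (m+1) * (Nat.card {T : OTree // MemZ T m k} *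
      gf (m - k) (n - m)) := by
  rw [memO_card, goodP_card]
  let f : ℕ → ℕ := fun c => match c with
    | 0 => 0
    | m + 1 => Nat.card {T : OTree // MemZ T m k} * gf (m - k) (n - m)
  have h1 : ∀ S ∈ (Finset.range (n+1)).powerset,
      Nat.card {t // GoodZ S k t} * gf (S.card - (k+1)) (n + 1 - S.card) = f S.card := by
    intro S _
    cases hc : S.card with
    | zero =>
      rw [Finset.card_eq_zero] at hc
      subst hc
      simp [goodZ_card_empty, f]
    | succ m =>
      rw [goodZ_card S m k hc]
      simp [f]
  rw [Finset.sum_congr rfl h1, Finset.sum_powerset_apply_card, Finset.card_range,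
    Finset.sum_range_succ']
  simp only [smul_eq_mul, f, mul_zero, add_zero]
  symm
  refine Finset.sum_subset ?_ ?_
  · intro m hm
    simp at hm ⊢; omega
  · intro m hm hm'
    simp at hm hm'
    rw [memZ_card_zero m k (by by_contra h; have := hm' (by omega); omega)]
    simp

end OTree

/-- For `0 ≤ k < n`,
`o(n,k) = ∑_{m=k}^{n} C(n+1, m+1) · z(m,k) · ((m-k)/(n-k)) · (n-k)^{(n-m)}`,
where `x^{(j)}` is the rising factorial `x(x+1)⋯(x+j-1)`. -/
theorem o_formula (n k : ℕ) (hkn : k < n) :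
    (Nat.card {T : OTree // MemO T n k} : ℚ) =
      ∑ m ∈ Finset.Icc k n,
        ((n + 1).choose (m + 1) : ℚ) * (Nat.card {T : OTree // MemZ T m k} : ℚ) *
          (((m : ℚ) - (k : ℚ)) / ((n : ℚ) - (k : ℚ))) *
          ((n - k).ascFactorial (n - m) : ℚ) := by
  rw [OTree.o_nat n k hkn, Nat.cast_sum]
  refine Finset.sum_congr rfl fun m hm => ?_
  rw [Finset.mem_Icc] at hm
  rw [Nat.cast_mul, Nat.cast_mul, OTree.gf_eq _ _ (by omega),
    show m - k + (n - m) = n - k by omega, Nat.cast_sub hm.1, Nat.cast_sub hkn.le]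
  ring
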